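/- arXiv:1306.2748 — 2 statements merged into one kernel-verified Lean document; each statement's English description precedes it below -/
import Mathlib

section
/- For a prime p > 2 and integer N, the count L(N,p) of quadruples (b₁,…,b₄) modulo p with b₁²+b₂²+b₃²+b₄² ≡ N (mod p) and b₁b₂b₃b₄ ≡ −1 (mod p) satisfies |L(N,p) − p²| ≤ 30·p^{3/2}. -/
open Finset ComplexConjugate in
/-- Large-sieve inequality on a finite abelian group, for points of multiplicity at most `k`. -/
theorem AddChar.sum_norm_sq_sum_mul_apply_le {A ι : Type*} [AddCommGroup A] [Fintype A]
    [DecidableEq A] [Fintype ι] (f : ι → A) (w : ι → ℂ) (k : ℕ)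
    (hk : ∀ a, #{i | f i = a} ≤ k) :
    ∑ ψ : AddChar A ℂ, ‖∑ i, w i * ψ (f i)‖ ^ 2 ≤ Fintype.card A * k * ∑ i, ‖w i‖ ^ 2 := by
  have expand : ((∑ ψ : AddChar A ℂ, ‖∑ i, w i * ψ (f i)‖ ^ 2 : ℝ) : ℂ) =
      Fintype.card A * ∑ i, ∑ j, if f j = f i then w i * conj (w j) else 0 := by
    push_cast
    simp_rw [← Complex.mul_conj', map_sum, Finset.sum_mul_sum]
    rw [Finset.sum_comm, Finset.mul_sum]
    refine Finset.sum_congr rfl fun i _ => ?_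
    rw [Finset.sum_comm, Finset.mul_sum]
    refine Finset.sum_congr rfl fun j _ => ?_
    have h (ψ : AddChar A ℂ) : w i * ψ (f i) * conj (w j * ψ (f j)) =
        w i * conj (w j) * ψ (f i - f j) := by
      rw [map_mul, ← AddChar.map_neg_eq_conj, sub_eq_add_neg, AddChar.map_add_eq_mul]
      ring
    simp_rw [h, ← Finset.mul_sum, AddChar.sum_apply_eq_ite, sub_eq_zero, eq_comm (a := f i)]
    split_ifs <;> ring
  have fiber (i : ι) : ∑ j, (if f j = f i then ‖w i‖ ^ 2 else 0) ≤ k * ‖w i‖ ^ 2 := by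
    rw [← Finset.sum_filter, Finset.sum_const, nsmul_eq_mul]
    gcongr
    exact hk _
  have double : ∑ i, ∑ j, (if f j = f i then ‖w i‖ ^ 2 else 0) ≤ k * ∑ i, ‖w i‖ ^ 2 := by
    rw [Finset.mul_sum]
    exact Finset.sum_le_sum fun i _ => fiber i
  have double' : ∑ i, ∑ j, (if f j = f i then ‖w j‖ ^ 2 else 0) ≤ k * ∑ i, ‖w i‖ ^ 2 := by
    rw [Finset.sum_comm]
    simpa only [eq_comm] using double
  have offdiag : ‖∑ i, ∑ j, if f j = f i then w i * conj (w j) else 0‖ ≤ k * ∑ i, ‖w i‖ ^ 2 := by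
    calc _ ≤ ∑ i, ∑ j, ((if f j = f i then ‖w i‖ ^ 2 else 0) +
            (if f j = f i then ‖w j‖ ^ 2 else 0)) / 2 := by
          refine (norm_sum_le _ _).trans (Finset.sum_le_sum fun i _ =>
            (norm_sum_le _ _).trans (Finset.sum_le_sum fun j _ => ?_))
          split_ifs
          · rw [norm_mul, RCLike.norm_conj]
            nlinarith [sq_nonneg (‖w i‖ - ‖w j‖)]
          · simp
      _ ≤ _ := by
          simp_rw [← Finset.sum_div, Finset.sum_add_distrib]
          linarith
  have hnonneg : 0 ≤ ∑ ψ : AddChar A ℂ, ‖∑ i, w i * ψ (f i)‖ ^ 2 := by positivity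
  rw [← Complex.norm_of_nonneg hnonneg, expand, norm_mul, Complex.norm_natCast, mul_assoc]
  gcongr

open Finset in
theorem AddChar.sum_norm_sq_sum_mul_apply_neg_le {A : Type*} [AddCommGroup A] [Fintype A]
    [DecidableEq A] (c : AddChar A ℂ → ℂ) :
    ∑ a, ‖∑ ψ : AddChar A ℂ, c ψ * ψ (-a)‖ ^ 2 ≤ Fintype.card A * ∑ ψ, ‖c ψ‖ ^ 2 := by
  have h := AddChar.sum_norm_sq_sum_mul_apply_le (fun ψ : AddChar A ℂ => ψ) c 1
    fun a => by simp [Finset.filter_eq']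
  rw [← Equiv.sum_comp ((Equiv.neg A).trans AddChar.doubleDualEquiv.toEquiv)] at h
  simpa [AddChar.card_eq, AddChar.coe_doubleDualEquiv] using h

open Finset in
theorem Fintype.sum_comp_le_card_fiber_mul_sum {α β : Type*} [Fintype α] [Fintype β]
    [DecidableEq β] (u : α → β) (g : β → ℝ) (hg : ∀ b, 0 ≤ g b) (k : ℕ)
    (hk : ∀ b, #{a | u a = b} ≤ k) : ∑ a, g (u a) ≤ k * ∑ b, g b := by
  rw [← Finset.sum_fiberwise' univ u g, Finset.mul_sum]
  refine Finset.sum_le_sum fun b _ => ?_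
  rw [Finset.sum_const, nsmul_eq_mul]
  exact mul_le_mul_of_nonneg_right (mod_cast hk b) (hg b)

open Finset in
theorem AddChar.card_mul_card_sum_eq {A ι : Type*} [AddCommGroup A] [Fintype A]
    [DecidableEq A] [Fintype ι] (f : ι → A) (n : ℕ) (a : A) :
    (Fintype.card A * #{b : Fin n → ι | ∑ i, f (b i) = a} : ℂ) =
      ∑ ψ : AddChar A ℂ, (∑ i, ψ (f i)) ^ n * ψ (-a) := by
  have h (ψ : AddChar A ℂ) : (∑ i, ψ (f i)) ^ n * ψ (-a) =
      ∑ b : Fin n → ι, ψ (∑ i, f (b i) - a) := by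
    rw [Fintype.sum_pow, Finset.sum_mul]
    refine Finset.sum_congr rfl fun b _ => ?_
    rw [sub_eq_add_neg, AddChar.map_add_eq_mul]
    exact congrArg (· * ψ (-a)) (map_prod ψ.toMonoidHom (fun i => .ofAdd (f (b i))) univ).symm
  simp_rw [h]
  rw [Finset.sum_comm]
  simp_rw [AddChar.sum_apply_eq_ite, sub_eq_zero]
  rw [← Finset.sum_filter, Finset.sum_const, nsmul_eq_mul, mul_comm]

open Finset in
/-- The variance of the number of representations as a sum of `n + 1` points of an injective
family, in terms of a uniform bound for its nontrivial exponential sums. -/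
theorem AddChar.sum_sq_card_sum_eq_sub_le {A ι : Type*} [AddCommGroup A] [Fintype A]
    [DecidableEq A] [Fintype ι] {f : ι → A} (hf : f.Injective) (n : ℕ) {B : ℝ}
    (hB : ∀ ψ : AddChar A ℂ, ψ ≠ 0 → ‖∑ i, ψ (f i)‖ ^ 2 ≤ B) (hB0 : 0 ≤ B) :
    ∑ a, ((Fintype.card A : ℝ) * #{b : Fin (n + 1) → ι | ∑ i, f (b i) = a} -
        (Fintype.card ι : ℝ) ^ (n + 1)) ^ 2 ≤
      Fintype.card A ^ 2 * Fintype.card ι * B ^ n := by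
  set S : AddChar A ℂ → ℂ := fun ψ => ∑ i, ψ (f i)
  set c : AddChar A ℂ → ℂ := fun ψ => if ψ = 0 then 0 else S ψ ^ (n + 1)
  have hdev (a : A) : (((Fintype.card A : ℝ) * #{b : Fin (n + 1) → ι | ∑ i, f (b i) = a} -
        (Fintype.card ι : ℝ) ^ (n + 1) : ℝ) : ℂ) = ∑ ψ, c ψ * ψ (-a) := by
    push_cast
    rw [AddChar.card_mul_card_sum_eq, ← Finset.sum_erase_add univ _ (mem_univ 0),
      ← Finset.sum_erase_add univ (fun ψ => c ψ * ψ (-a)) (mem_univ 0)]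
    have h : ∑ ψ ∈ univ.erase 0, c ψ * ψ (-a) = ∑ ψ ∈ univ.erase 0, S ψ ^ (n + 1) * ψ (-a) :=
      Finset.sum_congr rfl fun ψ hψ => by simp [c, ne_of_mem_erase hψ]
    rw [h]
    simp [c, S]
  have hc (ψ : AddChar A ℂ) : ‖c ψ‖ ^ 2 ≤ B ^ n * ‖S ψ‖ ^ 2 := by
    by_cases h : ψ = 0
    · simp only [c, h, if_true, norm_zero, zero_pow two_ne_zero]
      positivity
    · simp only [c, h, if_false, norm_pow]
      rw [← pow_mul, mul_comm, pow_mul, pow_succ]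
      gcongr
      exact hB ψ h
  have hS := AddChar.sum_norm_sq_sum_mul_apply_le f (fun _ => 1) 1 fun a =>
    Finset.card_le_one.2 fun i hi j hj => hf (by simp_all)
  simp only [one_mul, norm_one, one_pow, sum_const, card_univ, nsmul_eq_mul, mul_one,
    Nat.cast_one] at hS
  calc _ = ∑ a, ‖∑ ψ, c ψ * ψ (-a)‖ ^ 2 := by
        refine Finset.sum_congr rfl fun a _ => ?_
        rw [← hdev, Complex.norm_real, Real.norm_eq_abs, sq_abs]
    _ ≤ Fintype.card A * ∑ ψ, ‖c ψ‖ ^ 2 := AddChar.sum_norm_sq_sum_mul_apply_neg_le c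
    _ ≤ Fintype.card A * (B ^ n * (Fintype.card A * Fintype.card ι)) := by
        gcongr
        calc _ ≤ ∑ ψ, B ^ n * ‖S ψ‖ ^ 2 := Finset.sum_le_sum fun ψ _ => hc ψ
          _ = B ^ n * ∑ ψ, ‖S ψ‖ ^ 2 := (Finset.mul_sum _ _ _).symm
          _ ≤ _ := by gcongr
    _ = _ := by ring

open Finset in
theorem Units.card_filter_val_pow_eq_le {F : Type*} [Field F] [Fintype F] [DecidableEq F]
    {n : ℕ} (hn : 0 < n) (a : F) : #{b : Fˣ | (b : F) ^ n = a} ≤ n := by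
  calc _ = #(image (fun b : Fˣ => (b : F)) {b : Fˣ | (b : F) ^ n = a}) :=
        (card_image_of_injective _ Units.val_injective).symm
    _ ≤ #(Polynomial.nthRoots n a).toFinset := card_le_card fun x hx => by
        obtain ⟨b, hb, rfl⟩ := mem_image.1 hx
        simpa [Polynomial.mem_nthRoots hn] using hb
    _ ≤ n := (Multiset.toFinset_card_le _).trans (Polynomial.card_nthRoots n a)

open Finset in
theorem AddChar.norm_sq_sum_units_sq_mul_le {F : Type*} [Field F] [Fintype F] [DecidableEq F]
    {φ : AddChar F ℂ} (hφ : φ ≠ 0) (χ : AddChar (Additive Fˣ) ℂ) :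
    ‖∑ b : Fˣ, χ (.ofMul b) * φ ((b : F) ^ 2)‖ ^ 2 ≤ 4 * Fintype.card F := by
  set U : AddChar F ℂ → ℂ := fun θ => ∑ b : Fˣ, χ (.ofMul b) * θ ((b : F) ^ 2)
  have hshift (l : Fˣ) : ‖U (φ.mulShift ((l : F) ^ 2))‖ = ‖U φ‖ := by
    have h : χ (.ofMul l) * U (φ.mulShift ((l : F) ^ 2)) = U φ := by
      simp only [U, Finset.mul_sum]
      rw [← Equiv.sum_comp (Equiv.mulLeft l) fun b : Fˣ => χ (.ofMul b) * φ ((b : F) ^ 2)]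
      refine Finset.sum_congr rfl fun b _ => ?_
      simp [AddChar.map_add_eq_mul, mul_pow, mul_assoc]
    rw [← h, norm_mul, AddChar.norm_apply, one_mul]
  have horbit := Fintype.sum_comp_le_card_fiber_mul_sum
    (fun l : Fˣ => φ.mulShift ((l : F) ^ 2)) (fun θ => ‖U θ‖ ^ 2) (fun _ => by positivity) 2
    fun θ => by
      by_cases h : ∃ a, φ.mulShift a = θ
      · obtain ⟨a, rfl⟩ := h
        refine (card_le_card fun l hl => ?_).trans
          (Units.card_filter_val_pow_eq_le two_pos a)
        simpa using AddChar.to_mulShift_inj_of_isPrimitive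
          (AddChar.IsPrimitive.of_ne_one hφ) (by simpa using hl)
      · rw [Finset.filter_false_of_mem fun l _ hl => h ⟨_, hl⟩]
        simp
  have hsum := AddChar.sum_norm_sq_sum_mul_apply_le (fun b : Fˣ => (b : F) ^ 2)
    (fun b => χ (.ofMul b)) 2 fun a => Units.card_filter_val_pow_eq_le two_pos a
  simp only [hshift, AddChar.norm_apply, one_pow, sum_const, card_univ, nsmul_eq_mul, mul_one,
    Nat.cast_ofNat] at horbit hsum
  have hpos : (0 : ℝ) < Fintype.card Fˣ := mod_cast Fintype.card_pos
  change ‖U φ‖ ^ 2 ≤ _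
  refine le_of_mul_le_mul_left ?_ hpos
  calc _ ≤ _ := horbit
    _ ≤ 2 * (Fintype.card F * 2 * Fintype.card Fˣ) := by gcongr
    _ = _ := by ring

/-- The point `(b², b)` of `F × Fˣ`, with the second factor written additively. -/
def unitSqPoint {F : Type*} [Field F] (b : Fˣ) : F × Additive Fˣ := ((b : F) ^ 2, .ofMul b)

theorem unitSqPoint_injective {F : Type*} [Field F] :
    Function.Injective (unitSqPoint (F := F)) := fun _ _ h => 
  congrArg (fun x : F × Additive Fˣ => x.2.toMul) h

theorem norm_sq_sum_unitSqPoint_le {F : Type*} [Field F] [Fintype F] [DecidableEq F]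
    {ψ : AddChar (F × Additive Fˣ) ℂ} (hψ : ψ ≠ 0) :
    ‖∑ b : Fˣ, ψ (unitSqPoint b)‖ ^ 2 ≤ 4 * Fintype.card F := by
  set φ : AddChar F ℂ := ψ.compAddMonoidHom (AddMonoidHom.inl F (Additive Fˣ))
  set χ : AddChar (Additive Fˣ) ℂ := ψ.compAddMonoidHom (AddMonoidHom.inr F (Additive Fˣ))
  have hsplit (x : F) (m : Additive Fˣ) : ψ (x, m) = χ m * φ x := by
    simp [φ, χ, ← AddChar.map_add_eq_mul]
  simp only [unitSqPoint, hsplit]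
  by_cases hφ : φ = 0
  · have hχ : χ ≠ 0 := fun hχ => hψ (by ext ⟨x, m⟩; simp [hsplit, hφ, hχ])
    have h := AddChar.sum_eq_zero_iff_ne_zero.2 hχ
    rw [← Equiv.sum_comp Additive.ofMul] at h
    simp [hφ, h]
  · exact AddChar.norm_sq_sum_units_sq_mul_le hφ χ

open Finset in
theorem card_sum_unitSqPoint_eq_dilate {F : Type*} [Field F] [Fintype F] [DecidableEq F]
    (l : Fˣ) (n : ℕ) (a : F × Additive Fˣ) :
    #{b : Fin n → Fˣ | ∑ i, unitSqPoint (b i) = ((l : F) ^ 2 * a.1, n • .ofMul l + a.2)} =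
      #{b : Fin n → Fˣ | ∑ i, unitSqPoint (b i) = a} := by
  symm
  refine Finset.card_equiv (Equiv.mulLeft (fun _ : Fin n => l)) fun b => ?_
  simp [unitSqPoint, Prod.ext_iff, Prod.fst_sum, Prod.snd_sum, mul_pow, ← Finset.mul_sum,
    Finset.sum_add_distrib]

open Finset in
theorem sq_card_sum_four_unitSqPoint_eq_sub_le {F : Type*} [Field F] [Fintype F] [DecidableEq F]
    (a : F × Additive Fˣ) :
    ((Fintype.card F : ℝ) * #{b : Fin 4 → Fˣ | ∑ i, unitSqPoint (b i) = a} -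
      (Fintype.card Fˣ : ℝ) ^ 3) ^ 2 ≤ 256 * Fintype.card F ^ 5 := by
  set Δ : F × Additive Fˣ → ℝ := fun a =>
    (Fintype.card (F × Additive Fˣ) : ℝ) * #{b : Fin 4 → Fˣ | ∑ i, unitSqPoint (b i) = a} -
      (Fintype.card Fˣ : ℝ) ^ 4
  have hcard : Fintype.card (F × Additive Fˣ) = Fintype.card F * Fintype.card Fˣ := by
    rw [Fintype.card_prod, Fintype.card_congr Additive.toMul]
  have horbit := Fintype.sum_comp_le_card_fiber_mul_sum
    (fun l : Fˣ => (((l : F) ^ 2 * a.1, 4 • .ofMul l + a.2) : F × Additive Fˣ))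
    (fun x => Δ x ^ 2) (fun _ => sq_nonneg _) 4 fun x => by
      refine (card_le_card fun l hl => ?_).trans (Units.card_filter_val_pow_eq_le
        (n := 4) (by norm_num) (((x.2 - a.2).toMul : Fˣ) : F))
      simp only [mem_filter, mem_univ, true_and] at hl ⊢
      simp [← hl]
  have hvar := AddChar.sum_sq_card_sum_eq_sub_le (unitSqPoint_injective (F := F)) 3
    (fun _ hψ => norm_sq_sum_unitSqPoint_le hψ) (by positivity)
  have hpos : (0 : ℝ) < Fintype.card Fˣ := mod_cast Fintype.card_pos
  simp only [Δ, card_sum_unitSqPoint_eq_dilate, sum_const, card_univ, nsmul_eq_mul,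
    hcard] at horbit hvar
  push_cast at horbit hvar
  refine le_of_mul_le_mul_left ?_ (pow_pos hpos 3)
  calc _ = (Fintype.card Fˣ : ℝ) * ((Fintype.card F * Fintype.card Fˣ : ℝ) *
          #{b : Fin 4 → Fˣ | ∑ i, unitSqPoint (b i) = a} - (Fintype.card Fˣ : ℝ) ^ 4) ^ 2 := by
        ring
    _ ≤ _ := horbit
    _ ≤ _ := mul_le_mul_of_nonneg_left hvar (by norm_num)
    _ = _ := by ring

open Finset in
theorem card_filter_sum_sq_prod_eq_unit {F : Type*} [Field F] [Fintype F] [DecidableEq F]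
    (n : ℕ) (x : F) (m : Fˣ) :
    #{b : Fin n → F | ∑ i, b i ^ 2 = x ∧ ∏ i, b i = m} =
      #{b : Fin n → Fˣ | ∑ i, unitSqPoint (b i) = (x, .ofMul m)} := by
  symm
  refine Finset.card_bij (fun b _ i => (b i : F)) (fun b hb => ?_) (fun b _ c _ h => ?_)
    fun b hb => ?_
  · simp only [mem_filter, mem_univ, true_and, unitSqPoint, Prod.ext_iff, Prod.fst_sum,
      Prod.snd_sum] at hb ⊢
    refine ⟨hb.1, ?_⟩
    rw [← Units.coe_prod]
    exact congrArg (fun u : Additive Fˣ => (u.toMul : F)) hb.2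
  · funext i
    exact Units.ext (congrFun h i)
  · simp only [mem_filter, mem_univ, true_and] at hb
    have hne (i : Fin n) : b i ≠ 0 :=
      Finset.prod_ne_zero_iff.1 (hb.2 ▸ m.ne_zero) i (mem_univ i)
    refine ⟨fun i => Units.mk0 (b i) (hne i), ?_, rfl⟩
    simp only [mem_filter, mem_univ, true_and, unitSqPoint, Prod.ext_iff, Prod.fst_sum,
      Prod.snd_sum, Units.val_mk0]
    refine ⟨hb.1, ?_⟩
    rw [← ofMul_prod]
    congr 1
    ext
    simpa using hb.2

/-- |L(N,p) − p²| ≤ 30·p^{3/2}, where L(N,p) counts quadruples mod p with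
∑ bᵢ² ≡ N and ∏ bᵢ ≡ −1 (mod p). -/
theorem L_asymptotic (p : ℕ) [Fact p.Prime] (hp2 : 2 < p) (N : ℤ) :
    |((Finset.univ.filter (fun b : Fin 4 → ZMod p =>
        (∑ i, (b i) ^ 2) = (N : ZMod p) ∧ (∏ i, b i) = -1)).card : ℝ) - (p : ℝ) ^ 2|
      ≤ 30 * (p : ℝ) ^ ((3 : ℝ) / 2) := by
  have hvar := sq_card_sum_four_unitSqPoint_eq_sub_le
    (((N : ZMod p), .ofMul (-1)) : ZMod p × Additive (ZMod p)ˣ)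
  rw [← card_filter_sum_sq_prod_eq_unit, Units.val_neg, Units.val_one, ZMod.card,
    ZMod.card_units p, Nat.cast_sub (by lia), Nat.cast_one] at hvar
  set L : ℝ := ((Finset.univ.filter (fun b : Fin 4 → ZMod p =>
    (∑ i, (b i) ^ 2) = (N : ZMod p) ∧ (∏ i, b i) = -1)).card : ℝ)
  have hp : (2 : ℝ) < p := mod_cast hp2
  have hpow : (p : ℝ) ^ ((3 : ℝ) / 2) = p * √p := by
    rw [show (3 : ℝ) / 2 = 1 + 1 / 2 by norm_num, Real.rpow_add (by linarith), Real.rpow_one,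
      ← Real.sqrt_eq_rpow]
  have hs : √(p : ℝ) ^ 2 = p := Real.sq_sqrt (by linarith)
  have hs1 : 1 ≤ √(p : ℝ) := Real.one_le_sqrt.2 (by linarith)
  have hdev : |p * L - ((p : ℝ) - 1) ^ 3| ≤ p * (16 * (p * √p)) := by
    refine abs_le_of_sq_le_sq (hvar.trans_eq ?_) (by positivity)
    rw [mul_pow, mul_pow, mul_pow, hs]
    ring
  have hmain : |((p : ℝ) - 1) ^ 3 - p * p ^ 2| ≤ p * (3 * (p * √p)) := by
    rw [abs_le]
    constructor <;> nlinarith [mul_nonneg (sq_nonneg (p : ℝ)) (sub_nonneg.2 hs1)]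
  rw [hpow]
  refine le_of_mul_le_mul_left ?_ (show (0 : ℝ) < p by linarith)
  calc (p : ℝ) * |L - p ^ 2| = |(p * L - ((p : ℝ) - 1) ^ 3) + (((p : ℝ) - 1) ^ 3 - p * p ^ 2)| := by
        rw [← abs_of_pos (show (0 : ℝ) < p by linarith), ← abs_mul,
          abs_of_pos (show (0 : ℝ) < p by linarith)]
        congr 1
        ring
    _ ≤ p * (16 * (p * √p)) + p * (3 * (p * √p)) := (abs_add_le _ _).trans (add_le_add hdev hmain)
    _ ≤ p * (30 * (p * √p)) := by nlinarith [show 0 ≤ (p : ℝ) * (p * √p) by positivity]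
end

section
/- Let N be an odd integer, d an odd squarefree positive integer, and b₁,…,b₄ integers with d ∣ b₁b₂b₃b₄+1 and d ∣ N − (b₁²+…+b₄²). Define the singular series σ(N,d,b⃗) = ∑_{q=1}^{∞} q^{−4} V_q, where V_q = ∑_{a mod q, gcd(a,q)=1} e(a(b₁²+…+b₄²−N)/q)·∏_{j=1}^4 G(q, ad², 2adb_j). Then σ(N,d,b⃗) = d·∏_{p ∤ 2d, p prime} (1+1/p)(1−1/p^{ξ_p(N)+1}), where ξ_p(N) is the p-adic valuation of N. -/
/-- `e t = exp(2πit)`. -/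
noncomputable def e (t : ℂ) : ℂ := Complex.exp (2 * Real.pi * Complex.I * t)

/-- The Gauss sum `G(q,m,n) = ∑_{x mod q} e((mx²+nx)/q)`. -/
noncomputable def G (q : ℕ) (m n : ℤ) : ℂ :=
  ∑ x ∈ Finset.range q, e (((m * (x : ℤ) ^ 2 + n * (x : ℤ) : ℤ) : ℂ) / (q : ℂ))

/-- `V q = ∑_{a mod q, (a,q)=1} e(a(∑bⱼ²−N)/q)·∏ⱼ G(q, ad², 2adbⱼ)`. -/
noncomputable def V (q : ℕ) (N : ℤ) (d : ℕ) (b : Fin 4 → ℤ) : ℂ :=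
  ∑ a ∈ (Finset.range q).filter (fun a => Nat.Coprime a q),
    e ((((a : ℤ) * ((b 0 ^ 2 + b 1 ^ 2 + b 2 ^ 2 + b 3 ^ 2) - N) : ℤ) : ℂ) / (q : ℂ)) *
      ∏ j : Fin 4, G q ((a : ℤ) * (d : ℤ) ^ 2) (2 * (a : ℤ) * (d : ℤ) * b j)

open Finset

section FiniteRing

variable {R S T : Type*} [CommRing R] [Fintype R] [CommRing S] [Fintype S] [CommRing T] [Fintype T]

/-- The quadratic exponential sum `∑ x, ψ (a * (c * x + b) ^ 2)` over a finite ring. -/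
noncomputable def quadSum (ψ : AddChar R ℂ) (a c b : R) : ℂ :=
  ∑ x, ψ (a * (c * x + b) ^ 2)

/-- The complete exponential sum attached to `∑ j, (c * x j + b j) ^ 2 - n` over a finite ring. -/
noncomputable def localSum [DecidableEq R] (ψ : AddChar R ℂ) (n c : R) (b : Fin 4 → R) : ℂ :=
  ∑ a : Rˣ, ψ (-(a * n)) * ∏ j, quadSum ψ a c (b j)

lemma quadSum_of_ringEquiv (f : T ≃+* R × S) {χ : AddChar T ℂ} {ψ : AddChar R ℂ}
    {φ : AddChar S ℂ} (h : ∀ z, χ z = ψ (f z).1 * φ (f z).2) (a c b : T) :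
    quadSum χ a c b =
      quadSum ψ (f a).1 (f c).1 (f b).1 * quadSum φ (f a).2 (f c).2 (f b).2 := by
  rw [quadSum, quadSum, quadSum, Finset.sum_mul_sum, ← Fintype.sum_prod_type']
  exact Fintype.sum_equiv f.toEquiv _ _ fun x => by simp [h]

lemma localSum_of_ringEquiv [DecidableEq R] [DecidableEq S] [DecidableEq T] (f : T ≃+* R × S)
    {χ : AddChar T ℂ} {ψ : AddChar R ℂ} {φ : AddChar S ℂ}
    (h : ∀ z, χ z = ψ (f z).1 * φ (f z).2) (n c : T) (b : Fin 4 → T) :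
    localSum χ n c b = localSum ψ (f n).1 (f c).1 (fun j => (f (b j)).1) *
      localSum φ (f n).2 (f c).2 (fun j => (f (b j)).2) := by
  rw [localSum, localSum, localSum, Finset.sum_mul_sum, ← Fintype.sum_prod_type']
  refine Fintype.sum_equiv ((Units.mapEquiv f.toMulEquiv).trans MulEquiv.prodUnits).toEquiv _ _
    fun a => ?_
  simp only [quadSum_of_ringEquiv f h, Finset.prod_mul_distrib, h]
  simp [MulEquiv.prodUnits]
  ring

lemma localSum_mulShift [DecidableEq R] (ψ : AddChar R ℂ) (u : Rˣ) (n c : R) (b : Fin 4 → R) :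
    localSum (ψ.mulShift u) n c b = localSum ψ n c b := by
  refine Fintype.sum_equiv (Equiv.mulLeft u) _ _ fun a => ?_
  simp [quadSum, AddChar.mulShift_apply, mul_assoc]

lemma quadSum_of_isUnit (ψ : AddChar R ℂ) (a b : R) {c : R} (hc : IsUnit c) :
    quadSum ψ a c b = quadSum ψ a 1 0 := by
  obtain ⟨u, rfl⟩ := hc
  exact Fintype.sum_equiv (u.mulLeft.trans (Equiv.addRight b)) _ _ fun x => by simp

lemma localSum_of_isUnit [DecidableEq R] (ψ : AddChar R ℂ) (n : R) (b : Fin 4 → R)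
    {c : R} (hc : IsUnit c) :
    localSum ψ n c b = ∑ a : Rˣ, ψ (-(a * n)) * quadSum ψ a 1 0 ^ 4 := by
  simp [localSum, quadSum_of_isUnit ψ _ _ hc]

lemma quadSum_sq_mul_sq_add_sq (ψ : AddChar R ℂ) (a : R) {s t : R} (h : IsUnit (s ^ 2 + t ^ 2)) :
    quadSum ψ ((s ^ 2 + t ^ 2) * a) 1 0 ^ 2 = quadSum ψ a 1 0 ^ 2 := by
  simp only [quadSum, sq (∑ _, _), Finset.sum_mul_sum, ← Fintype.sum_prod_type',
    ← AddChar.map_add_eq_mul]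
  have hinj : Function.Injective fun x : R × R => (s * x.1 + t * x.2, -t * x.1 + s * x.2) := by
    rintro ⟨x, y⟩ ⟨z, w⟩ hxy
    simp only [Prod.mk.injEq] at hxy ⊢
    exact ⟨h.mul_left_cancel (by linear_combination s * hxy.1 - t * hxy.2),
      h.mul_left_cancel (by linear_combination t * hxy.1 + s * hxy.2)⟩
  refine Fintype.sum_equiv (Equiv.ofBijective _ (Finite.injective_iff_bijective.mp hinj)) _ _
    fun x => ?_
  simp only [Equiv.ofBijective_apply]
  congr 1
  ring

lemma quadSum_mul_quadSum_neg [DecidableEq R] {ψ : AddChar R ℂ} (hψ : ψ.IsPrimitive)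
    (h2 : IsUnit (2 : R)) {a : R} (ha : IsUnit a) :
    quadSum ψ a 1 0 * quadSum ψ (-a) 1 0 = Fintype.card R := by
  simp only [quadSum, Finset.sum_mul_sum, ← Fintype.sum_prod_type', ← AddChar.map_add_eq_mul]
  have hinj : Function.Injective fun x : R × R => (x.1 + x.2, x.1 - x.2) := by
    rintro ⟨x, y⟩ ⟨z, w⟩ hxy
    simp only [Prod.mk.injEq] at hxy ⊢
    exact ⟨h2.mul_left_cancel (by linear_combination hxy.1 + hxy.2),
      h2.mul_left_cancel (by linear_combination hxy.1 - hxy.2)⟩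
  trans ∑ x : R × R, ψ (x.2 * (a * x.1))
  · refine Fintype.sum_equiv (Equiv.ofBijective _ (Finite.injective_iff_bijective.mp hinj)) _ _
      fun x => ?_
    simp only [Equiv.ofBijective_apply]
    congr 1
    ring
  · simp [Fintype.sum_prod_type, AddChar.sum_mulShift _ hψ, ha.mul_right_eq_zero]

lemma quadSum_pow_four [DecidableEq R] {ψ : AddChar R ℂ} (hψ : ψ.IsPrimitive)
    (h2 : IsUnit (2 : R)) {a s t : R} (ha : IsUnit a) (hst : s ^ 2 + t ^ 2 = -1) :
    quadSum ψ a 1 0 ^ 4 = (Fintype.card R : ℂ) ^ 2 := by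
  have h := quadSum_sq_mul_sq_add_sq ψ a (s := s) (t := t) (by rw [hst]; exact isUnit_one.neg)
  rw [hst, neg_one_mul] at h
  rw [← quadSum_mul_quadSum_neg hψ h2 ha, mul_pow, h]
  ring

/-- If translating by `t` multiplies each summand by a constant other than `1`, the sum is zero. -/
lemma quadSum_eq_zero {ψ : AddChar R ℂ} {a c b t : R} (hct : c ^ 2 * t = 0)
    (h : ψ (2 * a * c * t * b) ≠ 1) : quadSum ψ a c b = 0 := by
  have key : quadSum ψ a c b = ψ (2 * a * c * t * b) * quadSum ψ a c b := by
    rw [quadSum, Finset.mul_sum]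
    refine Fintype.sum_equiv (Equiv.subRight t) _ _ fun x => ?_
    rw [← AddChar.map_add_eq_mul]
    congr 1
    simp only [Equiv.subRight_apply]
    linear_combination a * (2 * x - t) * hct
  by_contra h0
  exact h (mul_right_cancel₀ h0 (by rw [← key, one_mul]))

end FiniteRing

section ZModSums

open ZMod

variable {q : ℕ} [NeZero q]

lemma e_intCast_div (z : ℤ) : e ((z : ℂ) / (q : ℂ)) = stdAddChar (z : ZMod q) := by
  rw [stdAddChar_coe, e, mul_div_assoc]

lemma sum_range_natCast_zmod (F : ZMod q → ℂ) : ∑ x ∈ range q, F (x : ZMod q) = ∑ z, F z := by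
  refine Finset.sum_bij' (fun x _ => (x : ZMod q)) (fun z _ => z.val) ?_ ?_ ?_ ?_ ?_
  · simp
  · simp [ZMod.val_lt]
  · intro x hx
    exact ZMod.val_cast_of_lt (Finset.mem_range.mp hx)
  · simp
  · simp

lemma sum_range_coprime_natCast_zmod (F : ZMod q → ℂ) :
    ∑ x ∈ (range q).filter (fun a => Nat.Coprime a q), F (x : ZMod q) =
      ∑ u : (ZMod q)ˣ, F u := by
  classical
  simp only [Finset.sum_filter, ← ZMod.isUnit_iff_coprime]
  rw [sum_range_natCast_zmod (fun z => if IsUnit z then F z else 0), ← Finset.sum_filter]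
  symm
  refine Finset.sum_bij (fun u _ => (u : ZMod q)) ?_ ?_ ?_ ?_
  · simp
  · simp [Units.ext_iff]
  · intro z hz
    obtain ⟨u, rfl⟩ := (Finset.mem_filter.mp hz).2
    exact ⟨u, by simp⟩
  · simp

lemma V_eq_localSum (n : ℤ) (d : ℕ) (b : Fin 4 → ℤ) :
    V q n d b =
      localSum (stdAddChar (N := q)) (n : ZMod q) (d : ZMod q) (fun j => (b j : ZMod q)) := by
  rw [localSum, ← sum_range_coprime_natCast_zmod
    (fun a : ZMod q => stdAddChar (-(a * (n : ZMod q))) * ∏ j, quadSum stdAddChar a d (b j : ZMod q)), V]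
  refine Finset.sum_congr rfl fun a _ => ?_
  have hG (j : Fin 4) : quadSum stdAddChar (a : ZMod q) d (b j : ZMod q) =
      stdAddChar ((a * b j ^ 2 : ℤ) : ZMod q) *
        G q ((a : ℤ) * (d : ℤ) ^ 2) (2 * (a : ℤ) * (d : ℤ) * b j) := by
    rw [quadSum, G, Finset.mul_sum, ← sum_range_natCast_zmod]
    refine Finset.sum_congr rfl fun x _ => ?_
    rw [e_intCast_div, ← AddChar.map_add_eq_mul]
    congr 1
    push_cast
    ring
  simp only [hG, Finset.prod_mul_distrib]
  rw [← mul_assoc, e_intCast_div]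
  congr 1
  simp only [Fin.prod_univ_four, ← AddChar.map_add_eq_mul]
  congr 1
  push_cast
  ring

lemma V_mul {m k : ℕ} (hmk : m.Coprime k) (hm : m ≠ 0) (hk : k ≠ 0) (n : ℤ) (d : ℕ)
    (b : Fin 4 → ℤ) : V (m * k) n d b = V m n d b * V k n d b := by
  have : NeZero m := ⟨hm⟩
  have : NeZero k := ⟨hk⟩
  obtain ⟨i, j, hij⟩ := Nat.isCoprime_iff_coprime.mpr hmk
  have hj : IsUnit (j : ZMod m) := IsUnit.of_mul_eq_one (k : ZMod m) (by
    simpa using congrArg (Int.cast : ℤ → ZMod m) hij)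
  have hi : IsUnit (i : ZMod k) := IsUnit.of_mul_eq_one (m : ZMod k) (by
    simpa using congrArg (Int.cast : ℤ → ZMod k) hij)
  obtain ⟨u, hu⟩ := hj
  obtain ⟨v, hv⟩ := hi
  have h (z : ZMod (m * k)) : stdAddChar z =
      (stdAddChar (N := m)).mulShift u (ZMod.chineseRemainder hmk z).1 *
        (stdAddChar (N := k)).mulShift v (ZMod.chineseRemainder hmk z).2 := by
    obtain ⟨z, rfl⟩ := ZMod.intCast_surjective z
    rw [map_intCast (ZMod.chineseRemainder hmk), Prod.fst_intCast, Prod.snd_intCast, AddChar.mulShift_apply,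
      AddChar.mulShift_apply, hu, hv, ← Int.cast_mul, ← Int.cast_mul, stdAddChar_coe,
      stdAddChar_coe, stdAddChar_coe, ← Complex.exp_add]
    congr 1
    have hm' : (m : ℂ) ≠ 0 := Nat.cast_ne_zero.mpr hm
    have hk' : (k : ℂ) ≠ 0 := Nat.cast_ne_zero.mpr hk
    have hij' : (i : ℂ) * m + j * k = 1 := mod_cast hij
    push_cast
    field_simp
    linear_combination -(z : ℂ) * hij'
  rw [V_eq_localSum, V_eq_localSum, V_eq_localSum, localSum_of_ringEquiv _ h, localSum_mulShift,
    localSum_mulShift]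
  simp

/-- The Ramanujan sum `c_q(n)`. -/
noncomputable def ramanujanSum (q : ℕ) [NeZero q] (n : ℤ) : ℂ :=
  ∑ a : (ZMod q)ˣ, stdAddChar (-((a : ZMod q) * (n : ZMod q)))

lemma sum_stdAddChar_neg_mul (n : ℤ) :
    ∑ z : ZMod q, stdAddChar (-(z * (n : ZMod q))) = if (q : ℤ) ∣ n then (q : ℂ) else 0 := by
  have h := AddChar.sum_mulShift (-(n : ZMod q)) (isPrimitive_stdAddChar q)
  simp only [mul_neg, neg_eq_zero, ZMod.intCast_zmod_eq_zero_iff_dvd, ZMod.card] at h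
  exact_mod_cast h

lemma ramanujanSum_prime_pow_succ {p : ℕ} (hp : p.Prime) [NeZero p] (k : ℕ) (n : ℤ) :
    ramanujanSum (p ^ (k + 1)) n =
      (if ((p ^ (k + 1) : ℕ) : ℤ) ∣ n then ((p ^ (k + 1) : ℕ) : ℂ) else 0) -
        (if ((p ^ k : ℕ) : ℤ) ∣ n then ((p ^ k : ℕ) : ℂ) else 0) := by
  rw [← sum_stdAddChar_neg_mul, ← sum_stdAddChar_neg_mul, ramanujanSum,
    ← sum_range_coprime_natCast_zmod (fun a => stdAddChar (-(a * (n : ZMod (p ^ (k + 1)))))),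
    ← sum_range_natCast_zmod, ← sum_range_natCast_zmod, eq_sub_iff_add_eq,
    ← Finset.sum_filter_add_sum_filter_not (range (p ^ (k + 1)))
      (fun a => Nat.Coprime a (p ^ (k + 1)))]
  congr 1
  have hcop (a : ℕ) : ¬ Nat.Coprime a (p ^ (k + 1)) ↔ p ∣ a := by
    rw [Nat.coprime_pow_right_iff k.succ_pos, Nat.coprime_comm, hp.coprime_iff_not_dvd, not_not]
  simp only [hcop]
  refine Finset.sum_bij (fun a _ => p * a) ?_ ?_ ?_ ?_
  · intro a ha
    simp only [Finset.mem_filter, Finset.mem_range] at ha ⊢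
    exact ⟨by rw [pow_succ']; exact Nat.mul_lt_mul_of_pos_left ha hp.pos, dvd_mul_right _ _⟩
  · intro a _ a' _ h
    exact Nat.eq_of_mul_eq_mul_left hp.pos h
  · intro a ha
    obtain ⟨ha, c, rfl⟩ := Finset.mem_filter.mp ha
    rw [Finset.mem_range, pow_succ'] at ha
    exact ⟨c, Finset.mem_range.mpr (Nat.lt_of_mul_lt_mul_left ha), rfl⟩
  · intro a _
    have h1 : (-((a : ZMod (p ^ k)) * n)) = ((-(a * n) : ℤ) : ZMod (p ^ k)) := by push_cast; rfl
    have h2 : (-(((p * a : ℕ) : ZMod (p ^ (k + 1))) * n)) =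
        ((-(p * a * n) : ℤ) : ZMod (p ^ (k + 1))) := by push_cast; rfl
    rw [h1, h2, stdAddChar_coe, stdAddChar_coe]
    congr 1
    have : (p : ℂ) ≠ 0 := Nat.cast_ne_zero.mpr hp.ne_zero
    push_cast
    field_simp
    ring

lemma exists_sq_add_sq_modEq {m n : ℕ} (hm : m ≠ 0) (h4 : 4 ∣ m) (hn : n % 4 = 1)
    (hnm : n.Coprime m) : ∃ s t : ℕ, s ^ 2 + t ^ 2 ≡ n [MOD m] := by
  obtain ⟨p, -, hp, hpn⟩ := Nat.forall_exists_prime_gt_and_modEq 0 hm hnm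
  have : Fact p.Prime := ⟨hp⟩
  have h : p % 4 = n % 4 := hpn.of_dvd h4
  obtain ⟨s, t, rfl⟩ := Nat.Prime.sq_add_sq (p := p) (by omega)
  exact ⟨s, t, hpn⟩

lemma ZMod.exists_sq_add_sq_eq_neg_one (hq : Odd q) : ∃ s t : ZMod q, s ^ 2 + t ^ 2 = -1 := by
  obtain ⟨c, rfl⟩ := hq
  obtain ⟨s, t, h⟩ := exists_sq_add_sq_modEq (m := 4 * (2 * c + 1)) (n := 4 * c + 1) (by omega)
    (by omega) (by omega) (by
      refine Nat.Coprime.mul_right (by simp) ?_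
      rw [Nat.coprime_iff_gcd_eq_one, show 4 * c + 1 = 2 * c + (2 * c + 1) by ring]
      simp)
  refine ⟨s, t, ?_⟩
  have h' := (ZMod.natCast_eq_natCast_iff _ _ _).mpr (h.of_dvd (dvd_mul_left (2 * c + 1) 4))
  have h0 : ((2 * c + 1 : ℕ) : ZMod (2 * c + 1)) = 0 := ZMod.natCast_self _
  push_cast at h' h0
  linear_combination h' + 2 * h0

lemma V_of_odd_of_coprime (hq : Odd q) (n : ℤ) {d : ℕ} (hd : d.Coprime q) (b : Fin 4 → ℤ) :
    V q n d b = (q : ℂ) ^ 2 * ramanujanSum q n := by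
  have h2 : IsUnit (2 : ZMod q) :=
    (ZMod.isUnit_iff_coprime 2 q).mpr (Nat.coprime_two_left.mpr hq)
  obtain ⟨s, t, hst⟩ := ZMod.exists_sq_add_sq_eq_neg_one hq
  rw [V_eq_localSum, localSum_of_isUnit _ _ _ ((ZMod.isUnit_iff_coprime d q).mpr hd),
    ramanujanSum, Finset.mul_sum]
  refine Finset.sum_congr rfl fun a _ => ?_
  rw [quadSum_pow_four (isPrimitive_stdAddChar q) h2 a.isUnit hst, ZMod.card, mul_comm]

end ZModSums

section PrimePowers

open ZMod

lemma two_pow_mul_of_isUnit {k : ℕ} {w : ZMod (2 ^ (k + 1))} (hw : IsUnit w) :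
    2 ^ k * w = 2 ^ k := by
  obtain ⟨x, rfl⟩ := ZMod.natCast_zmod_surjective w
  rw [ZMod.isUnit_iff_coprime, Nat.coprime_pow_right_iff k.succ_pos, Nat.coprime_two_right] at hw
  obtain ⟨c, rfl⟩ := hw
  have h0 : ((2 ^ (k + 1) : ℕ) : ZMod (2 ^ (k + 1))) = 0 := ZMod.natCast_self _
  push_cast at h0 ⊢
  linear_combination (c : ZMod (2 ^ (k + 1))) * h0

lemma stdAddChar_two_pow (k : ℕ) : stdAddChar (2 ^ k : ZMod (2 ^ (k + 1))) = -1 := by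
  have h : (2 ^ k : ZMod (2 ^ (k + 1))) = ((2 ^ k : ℤ) : ZMod (2 ^ (k + 1))) := by push_cast; rfl
  rw [h, stdAddChar_coe, ← Complex.exp_pi_mul_I]
  congr 1
  push_cast
  field_simp
  ring

lemma quadSum_zmod_four (ψ : AddChar (ZMod 4) ℂ) (a : ZMod 4) :
    quadSum ψ a 1 0 = 2 + 2 * ψ a := by
  rw [quadSum, ← sum_range_natCast_zmod]
  have h2 : a * 2 ^ 2 = 0 := by revert a; decide
  have h3 : a * 3 ^ 2 = a := by revert a; decide
  simp only [Finset.sum_range_succ, Finset.sum_range_zero]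
  push_cast
  simp only [one_mul, add_zero, h2, h3]
  simp
  ring

lemma quadSum_pow_four_two_pow (k : ℕ) {a : ZMod (2 ^ (k + 2))} (ha : IsUnit a) :
    quadSum stdAddChar ((1 + 2 ^ (k + 1)) * a) 1 0 ^ 4 = quadSum stdAddChar a 1 0 ^ 4 := by
  rcases k with _ | k
  · have h1 : stdAddChar ((1 + 2 ^ (0 + 1)) * a) = -stdAddChar a := by
      rw [add_mul, one_mul, two_pow_mul_of_isUnit ha, AddChar.map_add_eq_mul, stdAddChar_two_pow]
      ring
    have h2 : stdAddChar a ^ 2 = -1 := by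
      rw [← stdAddChar_two_pow (0 + 1), ← two_pow_mul_of_isUnit ha, sq, ← AddChar.map_add_eq_mul]
      congr 1
      ring
    have h3 := quadSum_zmod_four stdAddChar a
    have h4 := quadSum_zmod_four stdAddChar ((1 + 2 ^ (0 + 1)) * a)
    rw [h1] at h4
    refine (congrArg (· ^ 4) h4).trans (Eq.trans ?_ (congrArg (· ^ 4) h3).symm)
    linear_combination (-128 * stdAddChar a) * h2
  · have hcop : (1 + 2 ^ (k + 2)).Coprime (2 ^ (k + 3)) := by
      refine Nat.Coprime.pow_right _ (Nat.coprime_two_right.mpr ?_)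
      exact ⟨2 ^ (k + 1), by ring⟩
    obtain ⟨s, t, hst⟩ := exists_sq_add_sq_modEq (m := 2 ^ (k + 3)) (n := 1 + 2 ^ (k + 2))
      (by positivity) ⟨2 ^ (k + 1), by ring⟩ (by rw [pow_add]; omega) hcop
    have hst' := (ZMod.natCast_eq_natCast_iff _ _ _).mpr hst
    have hu := (ZMod.isUnit_iff_coprime _ _).mpr hcop
    rw [← hst'] at hu
    push_cast at hst' hu
    have h := quadSum_sq_mul_sq_add_sq stdAddChar a hu
    rw [hst'] at h
    have h' := congrArg (· ^ 2) h
    simpa only [← pow_mul] using h'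

lemma V_two_pow_succ {n : ℤ} (hn : Odd n) {d : ℕ} (hd : Odd d) (b : Fin 4 → ℤ) (k : ℕ) :
    V (2 ^ (k + 1)) n d b = 0 := by
  have hd' : IsUnit (d : ZMod (2 ^ (k + 1))) :=
    (ZMod.isUnit_iff_coprime _ _).mpr (Nat.Coprime.pow_right _ (Nat.coprime_two_right.mpr hd))
  rw [V_eq_localSum, localSum_of_isUnit _ _ _ hd']
  rcases k with _ | k
  · refine Finset.sum_eq_zero fun a _ => ?_
    have h : quadSum (stdAddChar (N := 2 ^ (0 + 1))) (a : ZMod (2 ^ (0 + 1))) 1 0 = 0 := by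
      have h1 := stdAddChar_two_pow 0
      have h2 := two_pow_mul_of_isUnit a.isUnit
      rw [pow_zero] at h1
      rw [pow_zero, one_mul] at h2
      rw [quadSum, ← sum_range_natCast_zmod, h2]
      simp [Finset.sum_range_succ, h1]
    simp [h]
  · have hn' : IsUnit (n : ZMod (2 ^ (k + 2))) := by
      rw [ZMod.coe_int_isUnit_iff_isCoprime]
      push_cast
      exact (Int.isCoprime_two_left.mpr hn).pow_left
    have hcop : (1 + 2 ^ (k + 1)).Coprime (2 ^ (k + 2)) := by
      refine Nat.Coprime.pow_right _ (Nat.coprime_two_right.mpr ?_)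
      exact ⟨2 ^ k, by ring⟩
    obtain ⟨u, hu⟩ := (ZMod.isUnit_iff_coprime _ _).mpr hcop
    push_cast at hu
    rw [← self_eq_neg, ← Finset.sum_neg_distrib]
    refine (Fintype.sum_equiv (Equiv.mulLeft u) _ _ fun a => ?_).symm
    rw [Equiv.coe_mulLeft, Units.val_mul, hu, quadSum_pow_four_two_pow k a.isUnit, ← neg_mul]
    congr 1
    have h2 := two_pow_mul_of_isUnit (a.isUnit.mul hn').neg
    rw [show -((1 + 2 ^ (k + 1)) * (a : ZMod (2 ^ (k + 2))) * n) =
      -(a * (n : ZMod (2 ^ (k + 2)))) + 2 ^ (k + 1) * -(a * (n : ZMod (2 ^ (k + 2)))) by ring,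
      AddChar.map_add_eq_mul, h2, stdAddChar_two_pow]
    ring

variable {p d : ℕ} {b : Fin 4 → ℤ}

lemma V_prime_of_dvd (hp : p.Prime) (hpd : p ∣ d) {n : ℤ}
    (h : (p : ℤ) ∣ n - (b 0 ^ 2 + b 1 ^ 2 + b 2 ^ 2 + b 3 ^ 2)) :
    V p n d b = (p : ℂ) ^ 4 * (p - 1) := by
  have : Fact p.Prime := ⟨hp⟩
  have hd : (d : ZMod p) = 0 := (ZMod.natCast_eq_zero_iff d p).mpr hpd
  have hn : (n : ZMod p) = b 0 ^ 2 + b 1 ^ 2 + b 2 ^ 2 + b 3 ^ 2 := by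
    have h' := (ZMod.intCast_zmod_eq_zero_iff_dvd _ p).mpr h
    push_cast at h'
    exact sub_eq_zero.mp h'
  rw [V_eq_localSum, localSum, hd, hn]
  trans ∑ _a : (ZMod p)ˣ, (p : ℂ) ^ 4
  · refine Finset.sum_congr rfl fun a _ => ?_
    simp only [quadSum, zero_mul, zero_add, Finset.sum_const, Finset.card_univ, ZMod.card,
      nsmul_eq_mul, Finset.prod_mul_distrib, Finset.prod_const, Fintype.card_fin]
    rw [mul_left_comm, Fin.prod_univ_four]
    simp only [← AddChar.map_add_eq_mul]
    rw [← mul_add, ← mul_add, ← mul_add, neg_add_cancel, AddChar.map_zero_eq_one, mul_one]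
  · rw [Finset.sum_const, Finset.card_univ, ZMod.card_units, nsmul_eq_mul, Nat.cast_sub hp.one_le]
    push_cast
    ring

lemma V_prime_pow_of_dvd (hp : p.Prime) (hp2 : p ≠ 2) (hpd : p ∣ d) (hd : Squarefree d)
    (hb : ∃ j, ¬ (p : ℤ) ∣ b j) (n : ℤ) (k : ℕ) : V (p ^ (k + 2)) n d b = 0 := by
  have : NeZero p := ⟨hp.ne_zero⟩
  obtain ⟨j, hj⟩ := hb
  rw [V_eq_localSum, localSum]
  refine Finset.sum_eq_zero fun a _ => mul_eq_zero_of_right _ (Finset.prod_eq_zero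
    (Finset.mem_univ j) (quadSum_eq_zero (t := (p : ZMod (p ^ (k + 2))) ^ k) ?_ ?_))
  · obtain ⟨c, rfl⟩ := hpd
    have h0 : ((p ^ (k + 2) : ℕ) : ZMod (p ^ (k + 2))) = 0 := ZMod.natCast_self _
    push_cast at h0 ⊢
    linear_combination (c : ZMod (p ^ (k + 2))) ^ 2 * h0
  · rw [← AddChar.map_zero_eq_one (stdAddChar (N := p ^ (k + 2))),
      (injective_stdAddChar (N := p ^ (k + 2))).ne_iff]
    intro h
    have h' : (((2 * d * b j) * p ^ k : ℤ) : ZMod (p ^ (k + 2))) = 0 := by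
      refine a.isUnit.mul_left_cancel ?_
      push_cast
      linear_combination h
    rw [ZMod.intCast_zmod_eq_zero_iff_dvd, Nat.cast_pow, pow_add, mul_comm _ ((p : ℤ) ^ k)] at h'
    have hpz : Prime (p : ℤ) := Nat.prime_iff_prime_int.mp hp
    have h'' := Int.dvd_of_mul_dvd_mul_left (pow_ne_zero k hpz.ne_zero) h'
    have hc : IsCoprime ((p : ℤ) ^ 2) (b j) := (hpz.coprime_iff_not_dvd.mpr hj).pow_left
    have hc2 : IsCoprime ((p : ℤ) ^ 2) 2 := by
      refine (hpz.coprime_iff_not_dvd.mpr fun h2 => hp2 ?_).pow_left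
      exact (Nat.prime_dvd_prime_iff_eq hp Nat.prime_two).mp (by exact_mod_cast h2)
    have hdvd : ((p * p : ℕ) : ℤ) ∣ d := by
      push_cast
      rw [← sq]
      exact hc2.dvd_of_dvd_mul_left (hc.dvd_of_dvd_mul_right h'')
    exact hp.one_lt.ne' (Nat.isUnit_iff.mp (hd p (Int.natCast_dvd_natCast.mp hdvd)))

end PrimePowers

section EulerFactors

variable {N d : ℕ} {b : Fin 4 → ℤ}

/-- The term `q⁻⁴ V_q` of the singular series. -/
noncomputable def seriesTerm (N d : ℕ) (b : Fin 4 → ℤ) (q : ℕ) : ℂ :=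
  (q : ℂ) ^ (-(4 : ℤ)) * V q N d b

lemma seriesTerm_zero : seriesTerm N d b 0 = 0 := by
  simp [seriesTerm, V]

lemma seriesTerm_one : seriesTerm N d b 1 = 1 := by
  simp [seriesTerm, V, G, e]

lemma seriesTerm_mul {m k : ℕ} (hmk : m.Coprime k) :
    seriesTerm N d b (m * k) = seriesTerm N d b m * seriesTerm N d b k := by
  rcases eq_or_ne m 0 with rfl | hm
  · simp [seriesTerm_zero]
  rcases eq_or_ne k 0 with rfl | hk
  · simp [seriesTerm_zero]
  rw [seriesTerm, V_mul hmk hm hk, Nat.cast_mul, mul_zpow, seriesTerm, seriesTerm]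
  ring

lemma seriesTerm_two_pow_succ (hN : Odd N) (hd : Odd d) (k : ℕ) :
    seriesTerm N d b (2 ^ (k + 1)) = 0 := by
  rw [seriesTerm, V_two_pow_succ (by exact_mod_cast hN) hd, mul_zero]

lemma seriesTerm_prime_of_dvd {p : ℕ} (hp : p.Prime) (hpd : p ∣ d)
    (h : (d : ℤ) ∣ N - (b 0 ^ 2 + b 1 ^ 2 + b 2 ^ 2 + b 3 ^ 2)) :
    seriesTerm N d b p = p - 1 := by
  have hp0 : (p : ℂ) ≠ 0 := Nat.cast_ne_zero.mpr hp.ne_zero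
  rw [seriesTerm, V_prime_of_dvd hp hpd ((Int.natCast_dvd_natCast.mpr hpd).trans h), zpow_neg]
  field_simp

lemma seriesTerm_prime_pow_of_dvd {p : ℕ} (hp : p.Prime) (hpd : p ∣ d) (hd : Odd d)
    (hsq : Squarefree d) (h : (d : ℤ) ∣ b 0 * b 1 * b 2 * b 3 + 1) (k : ℕ) :
    seriesTerm N d b (p ^ (k + 2)) = 0 := by
  have hp2 : p ≠ 2 := by
    rintro rfl
    exact Nat.not_even_iff_odd.mpr hd (even_iff_two_dvd.mpr hpd)
  have hb : ¬ (p : ℤ) ∣ b 0 := fun hb => by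
    have h1 := (Int.natCast_dvd_natCast.mpr hpd).trans h
    rw [mul_assoc, mul_assoc, Int.dvd_add_right (hb.mul_right _)] at h1
    exact hp.one_lt.ne' (Nat.dvd_one.mp (by exact_mod_cast h1))
  rw [seriesTerm, V_prime_pow_of_dvd hp hp2 hpd hsq ⟨0, hb⟩, mul_zero]

lemma seriesTerm_prime_pow_succ {p : ℕ} (hp : p.Prime) (hpd : ¬ p ∣ 2 * d) (k : ℕ) :
    seriesTerm N d b (p ^ (k + 1)) = ((p ^ (k + 1) : ℕ) : ℂ)⁻¹ ^ 2 *
      ((if p ^ (k + 1) ∣ N then ((p ^ (k + 1) : ℕ) : ℂ) else 0) -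
        (if p ^ k ∣ N then ((p ^ k : ℕ) : ℂ) else 0)) := by
  have : NeZero p := ⟨hp.ne_zero⟩
  have hodd : Odd p := hp.odd_of_ne_two fun h => hpd (h ▸ dvd_mul_right _ _)
  have hcop : d.Coprime (p ^ (k + 1)) :=
    (hp.coprime_iff_not_dvd.mpr fun h => hpd (h.mul_left 2)).symm.pow_right _
  have hp0 : ((p ^ (k + 1) : ℕ) : ℂ) ≠ 0 := Nat.cast_ne_zero.mpr (pow_ne_zero _ hp.ne_zero)
  rw [seriesTerm, V_of_odd_of_coprime hodd.pow _ hcop, ramanujanSum_prime_pow_succ hp, ← mul_assoc]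
  simp only [Int.natCast_dvd_natCast]
  congr 1
  rw [zpow_neg]
  field_simp

lemma tsum_seriesTerm_two_pow (hN : Odd N) (hd : Odd d) :
    ∑' k, seriesTerm N d b (2 ^ k) = 1 := by
  rw [tsum_eq_single 0, pow_zero, seriesTerm_one]
  intro k hk
  obtain ⟨k, rfl⟩ := Nat.exists_eq_succ_of_ne_zero hk
  exact seriesTerm_two_pow_succ hN hd k

lemma tsum_seriesTerm_prime_pow_of_dvd {p : ℕ} (hp : p.Prime) (hpd : p ∣ d) (hd : Odd d)
    (hsq : Squarefree d) (h1 : (d : ℤ) ∣ b 0 * b 1 * b 2 * b 3 + 1)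
    (h2 : (d : ℤ) ∣ N - (b 0 ^ 2 + b 1 ^ 2 + b 2 ^ 2 + b 3 ^ 2)) :
    ∑' k, seriesTerm N d b (p ^ k) = p := by
  rw [tsum_eq_sum (s := Finset.range 2)]
  · simp [Finset.sum_range_succ, seriesTerm_one, seriesTerm_prime_of_dvd hp hpd h2]
  · intro k hk
    obtain ⟨k, rfl⟩ := Nat.exists_eq_add_of_le' (not_lt.mp (Finset.mem_range.not.mp hk))
    exact seriesTerm_prime_pow_of_dvd hp hpd hd hsq h1 k

lemma hasSum_inv_pow_of_dvd {p : ℕ} (hp : p.Prime) (hN : N ≠ 0) :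
    HasSum (fun k => if p ^ k ∣ N then ((p : ℂ)⁻¹) ^ k else 0)
      ((((p : ℂ)⁻¹) ^ (N.factorization p + 1) - 1) / ((p : ℂ)⁻¹ - 1)) := by
  have hp1 : (p : ℂ)⁻¹ ≠ 1 := by
    simpa using hp.one_lt.ne'
  rw [← geom_sum_eq hp1]
  have h : ∀ k, p ^ k ∣ N ↔ k ∈ Finset.range (N.factorization p + 1) := fun k => by
    rw [hp.pow_dvd_iff_le_factorization hN, Finset.mem_range, Nat.lt_succ_iff]
  simp only [h]
  rw [Finset.sum_congr rfl fun k hk => (if_pos hk).symm]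
  exact hasSum_sum_of_ne_finset_zero fun k hk => if_neg hk

lemma tsum_seriesTerm_prime_pow {p : ℕ} (hp : p.Prime) (hpd : ¬ p ∣ 2 * d) (hN : N ≠ 0) :
    ∑' k, seriesTerm N d b (p ^ k) =
      (1 + 1 / (p : ℂ)) * (1 - 1 / (p : ℂ) ^ (N.factorization p + 1)) := by
  have hp0 : (p : ℂ) ≠ 0 := Nat.cast_ne_zero.mpr hp.ne_zero
  have hp1 : (p : ℂ) - 1 ≠ 0 := sub_ne_zero.mpr (Nat.cast_ne_one.mpr hp.one_lt.ne')
  have h := hasSum_inv_pow_of_dvd hp hN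
  have h' := ((hasSum_nat_add_iff' 1).mpr h).sub (h.mul_left ((p : ℂ)⁻¹ ^ 2))
  have hs : ∀ k, seriesTerm N d b (p ^ (k + 1)) =
      (if p ^ (k + 1) ∣ N then ((p : ℂ)⁻¹) ^ (k + 1) else 0) -
        (p : ℂ)⁻¹ ^ 2 * (if p ^ k ∣ N then ((p : ℂ)⁻¹) ^ k else 0) := fun k => by
    rw [seriesTerm_prime_pow_succ hp hpd]
    push_cast
    simp only [inv_pow]
    split_ifs <;> field_simp <;> ring
  simp only [← hs] at h'
  have h'' := (hasSum_nat_add_iff (f := fun k => seriesTerm N d b (p ^ k)) 1).mp h'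
  rw [h''.tsum_eq]
  have hq : (p : ℂ)⁻¹ - 1 = -((p : ℂ) - 1) / p := by field_simp; ring
  simp only [hq, Finset.sum_range_one, pow_zero, one_dvd, if_true, seriesTerm_one, inv_pow]
  field_simp
  ring

/-- The local factor bound that makes the singular series converge absolutely. -/
lemma norm_seriesTerm_prime_pow_succ_le (hN : Odd N) (hd : Odd d) (hsq : Squarefree d)
    (h1 : (d : ℤ) ∣ b 0 * b 1 * b 2 * b 3 + 1)
    (h2 : (d : ℤ) ∣ N - (b 0 ^ 2 + b 1 ^ 2 + b 2 ^ 2 + b 3 ^ 2)) {p : ℕ} (hp : p.Prime) (k : ℕ) :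
    ‖seriesTerm N d b (p ^ (k + 1))‖ * ((p ^ (k + 1) : ℕ) : ℝ) ^ 2 ≤
      if p ∣ N * d then ((2 * N + d ^ 3 : ℕ) : ℝ) else 1 := by
  have hd0 : 0 < d := hd.pos
  by_cases hpd : p ∣ d
  · rw [if_pos (hpd.mul_left N)]
    rcases k with _ | k
    · rw [zero_add, pow_one, seriesTerm_prime_of_dvd hp hpd h2, ← Nat.cast_pred hp.pos,
        Complex.norm_natCast]
      norm_cast
      have hle := Nat.le_of_dvd hd0 hpd
      calc (p - 1) * p ^ 2 ≤ p * p ^ 2 := Nat.mul_le_mul_right _ (Nat.sub_le _ _)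
        _ = p ^ 3 := by ring
        _ ≤ d ^ 3 := Nat.pow_le_pow_left hle 3
        _ ≤ _ := Nat.le_add_left _ _
    · rw [seriesTerm_prime_pow_of_dvd hp hpd hd hsq h1, norm_zero, zero_mul]
      positivity
  rcases eq_or_ne p 2 with rfl | hp2
  · rw [seriesTerm_two_pow_succ hN hd, norm_zero, zero_mul]
    split_ifs <;> positivity
  have hp2d : ¬ p ∣ 2 * d := fun h => (hp.dvd_mul.mp h).elim
    (fun h => hp2 ((Nat.prime_dvd_prime_iff_eq hp Nat.prime_two).mp h)) hpd
  have hp0 : ((p ^ (k + 1) : ℕ) : ℝ) ≠ 0 := Nat.cast_ne_zero.mpr (pow_ne_zero _ hp.ne_zero)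
  rw [seriesTerm_prime_pow_succ hp hp2d, norm_mul, norm_pow, norm_inv, Complex.norm_natCast,
    mul_right_comm, ← mul_pow, inv_mul_cancel₀ hp0, one_pow, one_mul]
  have hdvd : p ∣ N * d ↔ p ∣ N := ⟨fun h => (hp.dvd_mul.mp h).resolve_right hpd, (·.mul_right d)⟩
  simp only [hdvd]
  by_cases hpN : p ∣ N
  · rw [if_pos hpN]
    have hle (j : ℕ) : ‖if p ^ j ∣ N then ((p ^ j : ℕ) : ℂ) else 0‖ ≤ N := by
      split_ifs with h
      · rw [Complex.norm_natCast]
        exact_mod_cast Nat.le_of_dvd hN.pos h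
      · simp
    refine (norm_sub_le _ _).trans ((add_le_add (hle _) (hle _)).trans ?_)
    push_cast
    nlinarith [pow_nonneg (Nat.cast_nonneg (α := ℝ) d) 3]
  · rw [if_neg hpN, if_neg fun h => hpN ((dvd_pow_self p k.succ_ne_zero).trans h)]
    rcases k with _ | k
    · simp
    · rw [if_neg fun h => hpN ((dvd_pow_self p k.succ_ne_zero).trans h)]
      simp

lemma summable_norm_seriesTerm (hN : Odd N) (hd : Odd d) (hsq : Squarefree d)
    (h1 : (d : ℤ) ∣ b 0 * b 1 * b 2 * b 3 + 1)
    (h2 : (d : ℤ) ∣ N - (b 0 ^ 2 + b 1 ^ 2 + b 2 ^ 2 + b 3 ^ 2)) :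
    Summable fun q => ‖seriesTerm N d b q‖ := by
  set B : ℝ := ((2 * N + d ^ 3 : ℕ) : ℝ) with hB
  have hB1 : 1 ≤ B := by
    rw [hB]
    exact_mod_cast (show 1 ≤ 2 * N + d ^ 3 by have := hN.pos; omega)
  have hNd : N * d ≠ 0 := mul_ne_zero hN.pos.ne' hd.pos.ne'
  have hbound (q : ℕ) (hq : q ≠ 0) :
      ‖seriesTerm N d b q‖ * (q : ℝ) ^ 2 ≤ B ^ (N * d).primeFactors.card := by
    rw [Nat.multiplicative_factorization (fun q : ℕ => ‖seriesTerm N d b q‖ * (q : ℝ) ^ 2)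
      (fun x y hxy => by
        simp only [seriesTerm_mul hxy, norm_mul, Nat.cast_mul, mul_pow]
        ring) (by simp [seriesTerm_one]) hq, Finsupp.prod, Nat.support_factorization]
    calc _ ≤ ∏ p ∈ q.primeFactors, (if p ∣ N * d then B else 1) := by
          refine Finset.prod_le_prod (fun p _ => by positivity) fun p hp => ?_
          have hp' := Nat.prime_of_mem_primeFactors hp
          obtain ⟨k, hk⟩ := Nat.exists_eq_succ_of_ne_zero
            (hp'.factorization_pos_of_dvd hq (Nat.dvd_of_mem_primeFactors hp)).ne'
          rw [hk]
          exact norm_seriesTerm_prime_pow_succ_le hN hd hsq h1 h2 hp' k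
      _ = B ^ (q.primeFactors.filter (· ∣ N * d)).card := by
          rw [← Finset.prod_filter, Finset.prod_const]
      _ ≤ _ := by
          refine pow_le_pow_right₀ hB1 (Finset.card_le_card fun p hp => ?_)
          rw [Finset.mem_filter] at hp
          exact Nat.mem_primeFactors.mpr ⟨Nat.prime_of_mem_primeFactors hp.1, hp.2, hNd⟩
  refine Summable.of_nonneg_of_le (fun _ => norm_nonneg _) (fun q => ?_)
    ((Real.summable_one_div_nat_pow.mpr one_lt_two).mul_left (B ^ (N * d).primeFactors.card))
  rcases eq_or_ne q 0 with rfl | hq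
  · simp [seriesTerm_zero]
  · rw [mul_one_div, le_div_iff₀ (by positivity)]
    exact hbound q hq

end EulerFactors

lemma hasProd_ite_dvd_of_squarefree {d : ℕ} (hd : Squarefree d) (f : ℕ → ℂ) :
    HasProd (fun p : Nat.Primes => if (p : ℕ) ∣ d then f p else 1) (∏ p ∈ d.primeFactors, f p) := by
  change HasProd ((fun p : ℕ => if p ∣ d then f p else 1) ∘ ((↑) : {p : ℕ | p.Prime} → ℕ)) _
  rw [hasProd_subtype_iff_mulIndicator]
  have h : ∏ p ∈ d.primeFactors, f p = ∏ p ∈ d.primeFactors,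
      Set.mulIndicator {p : ℕ | p.Prime} (fun p : ℕ => if p ∣ d then f p else 1) p := by
    refine Finset.prod_congr rfl fun p hp => ?_
    simp [Set.mulIndicator, Nat.prime_of_mem_primeFactors hp, Nat.dvd_of_mem_primeFactors hp]
  rw [h]
  refine hasProd_prod_of_ne_finset_one fun p hp => ?_
  simp only [Nat.mem_primeFactors] at hp
  by_cases hp' : p.Prime <;> by_cases hpd : p ∣ d <;> simp_all [Set.mulIndicator]

/-- the singular series σ(N,d,b⃗) = ∑_{q≥1} q⁻⁴ V_q equals
d·∏_{p ∤ 2d} (1+1/p)(1−1/p^{ξ_p(N)+1}). -/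
theorem singular_series_eval (N : ℕ) (hN : Odd N) (d : ℕ) (hd : Odd d)
    (hsq : Squarefree d) (b : Fin 4 → ℤ)
    (h1 : (d : ℤ) ∣ (b 0 * b 1 * b 2 * b 3 + 1))
    (h2 : (d : ℤ) ∣ ((N : ℤ) - (b 0 ^ 2 + b 1 ^ 2 + b 2 ^ 2 + b 3 ^ 2))) :
    ∑' q : ℕ+, ((q : ℕ) : ℂ) ^ (-(4 : ℤ)) * V (q : ℕ) (N : ℤ) d b =
      (d : ℂ) * ∏' p : {p : ℕ // p.Prime ∧ ¬ (p : ℕ) ∣ 2 * d},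
        (1 + 1 / ((p : ℕ) : ℂ)) * (1 - 1 / ((p : ℕ) : ℂ) ^ (N.factorization (p : ℕ) + 1)) := by
  set L : ℕ → ℂ := fun p => (1 + 1 / (p : ℂ)) * (1 - 1 / (p : ℂ) ^ (N.factorization p + 1))
  have hEuler := EulerProduct.eulerProduct_hasProd seriesTerm_one seriesTerm_mul
    (summable_norm_seriesTerm hN hd hsq h1 h2) seriesTerm_zero
  have hinv : HasProd (fun p : Nat.Primes => if (p : ℕ) ∣ d then ((p : ℕ) : ℂ)⁻¹ else 1)
      (d : ℂ)⁻¹ := by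
    have h := hasProd_ite_dvd_of_squarefree hsq fun p => (p : ℂ)⁻¹
    rwa [Finset.prod_inv_distrib, ← Nat.cast_prod, Nat.prod_primeFactors_of_squarefree hsq] at h
  have hfactor (p : Nat.Primes) : (∑' k, seriesTerm N d b (p ^ k)) *
      (if (p : ℕ) ∣ d then ((p : ℕ) : ℂ)⁻¹ else 1) = if (p : ℕ) ∣ 2 * d then 1 else L p := by
    obtain ⟨p, hp⟩ := p
    dsimp only
    by_cases hpd : p ∣ d
    · rw [if_pos hpd, if_pos (hpd.mul_left 2),
        tsum_seriesTerm_prime_pow_of_dvd hp hpd hd hsq h1 h2,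
        mul_inv_cancel₀ (Nat.cast_ne_zero.mpr hp.ne_zero)]
    rw [if_neg hpd, mul_one]
    split_ifs with hp2d
    · obtain rfl := (Nat.prime_dvd_prime_iff_eq hp Nat.prime_two).mp
        ((hp.dvd_mul.mp hp2d).resolve_right hpd)
      exact tsum_seriesTerm_two_pow hN hd
    · exact tsum_seriesTerm_prime_pow hp hp2d hN.pos.ne'
  have hprod := hEuler.mul hinv
  simp only [hfactor] at hprod
  have hsub : HasProd (fun p : {p : ℕ // p.Prime ∧ ¬ p ∣ 2 * d} => L p)
      ((∑' q, seriesTerm N d b q) * (d : ℂ)⁻¹) := by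
    change HasProd (L ∘ ((↑) : {p : ℕ | p.Prime ∧ ¬ p ∣ 2 * d} → ℕ)) _
    change HasProd ((fun p : ℕ => if p ∣ 2 * d then 1 else L p) ∘
      ((↑) : {p : ℕ | p.Prime} → ℕ)) _ at hprod
    rw [hasProd_subtype_iff_mulIndicator] at hprod ⊢
    convert hprod using 1
    funext p
    by_cases hp : p.Prime <;> by_cases hpd : p ∣ 2 * d <;> simp [Set.mulIndicator, hp, hpd]
  rw [hsub.tprod_eq, mul_comm, inv_mul_cancel_right₀ (Nat.cast_ne_zero.mpr hsq.ne_zero)]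
  exact tsum_pnat_eq_tsum_of_eq_zero seriesTerm_zero
end
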